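/- arXiv:2104.10165 — 3 statements merged into one kernel-verified Lean document; each statement's English description precedes it below -/
import Mathlib

section
/- The real group algebra of the symmetric group on 3 letters is isomorphic, as an ℝ-algebra, to the product ℝ × ℝ × M₂(ℝ), where M₂(ℝ) denotes the algebra of 2×2 real matrices. -/
noncomputable section

/-!
Over a commutative ring in which `(n + 1)!` is invertible, the trivial, sign and standard
representations of `Perm (Fin (n + 1))` jointly map the group algebra onto `R × R × Mₙ(R)` as soon
as `2 ≤ n`. The standard representation alone is onto `Mₙ(R)`: on sum-zero vectors, `1 - (0 j)` is
the rank-one map `v ↦ (v j - v 0) (e j - e 0)`, and its translates by permutations span all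
matrices. A character factor `χ` can then be split off with the element `∑ g, χ g⁻¹ • g`, which
the other factors annihilate by orthogonality. For `n = 2` both sides are free of rank `6`, and a
surjection between free modules of the same finite rank is bijective.
-/

open Equiv Equiv.Perm MonoidAlgebra
open scoped Nat

variable {R : Type*} [CommRing R]

section Splitting

variable {G A : Type*} [Group G] [Fintype G] [Ring A] [Algebra R A]

lemma lift_prod_surjective (χ : G →* R) (ρ : G →* A) (hG : IsUnit (Fintype.card G : R))
    (hρ : Function.Surjective (lift R A G ρ)) (horth : ∑ g, χ g⁻¹ • ρ g = 0) :
    Function.Surjective (lift R (R × A) G (χ.prod ρ)) := by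
  have hprod : lift R (R × A) G (χ.prod ρ) = (lift R R G χ).prod (lift R A G ρ) := by
    ext g <;> simp
  obtain ⟨c, hc⟩ := hG.exists_left_inv
  let s : MonoidAlgebra R G := ∑ g, single g (χ g⁻¹)
  have hχs : lift R R G χ s = Fintype.card G := by
    simp [s, ← map_mul]
  have hρs : lift R A G ρ s = 0 := by
    simpa [s] using horth
  rintro ⟨x, a⟩
  obtain ⟨u, rfl⟩ := hρ a
  refine ⟨u + ((x - lift R R G χ u) * c) • s, ?_⟩
  simp [hprod, hχs, hρs, mul_assoc, hc]

end Splitting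

section Orthogonality

variable {α : Type*} [Fintype α] [DecidableEq α]

variable (R α) in
/-- The sign character of `Perm α`, with values in the coefficient ring. -/
def signCharacter : Perm α →* R :=
  (Int.castRingHom R : ℤ →* R).comp ((Units.coeHom ℤ).comp sign)

lemma signCharacter_inv (g : Perm α) : signCharacter R α g⁻¹ = signCharacter R α g := by
  simp [signCharacter]

lemma sum_signCharacter_mul_eq_zero {a b : α} (hab : a ≠ b) (f : Perm α → R)
    (hf : ∀ g, f (g * swap a b) = f g) : ∑ g, signCharacter R α g * f g = 0 := by
  refine Finset.sum_involution (fun g _ ↦ g * swap a b) ?_ ?_ ?_ ?_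
  · intro g _
    simp [signCharacter, hf, sign_swap hab]
  · intro g _ _
    simpa [swap_eq_one_iff] using hab
  · simp
  · simp

lemma sum_signCharacter_eq_zero [Nontrivial α] : ∑ g, signCharacter R α g = 0 := by
  obtain ⟨a, b, hab⟩ := exists_pair_ne α
  simpa using sum_signCharacter_mul_eq_zero hab (fun _ ↦ (1 : R)) fun _ ↦ rfl

lemma sum_signCharacter_mul_ite_apply_eq_zero (hα : 2 < Fintype.card α) (a i : α) :
    ∑ g : Perm α, signCharacter R α g * (if g a = i then 1 else 0) = 0 := by
  have hcard : 1 < (Finset.univ.erase a).card := by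
    rw [Finset.card_erase_of_mem (Finset.mem_univ a), Finset.card_univ]
    lia
  obtain ⟨b, hb, c, hc, hbc⟩ := Finset.one_lt_card.mp hcard
  refine sum_signCharacter_mul_eq_zero hbc _ fun g ↦ ?_
  rw [Perm.mul_apply, swap_apply_of_ne_of_ne (Finset.ne_of_mem_erase hb).symm
    (Finset.ne_of_mem_erase hc).symm]

lemma sum_perm_apply_eq {M : Type*} [AddCommMonoid M] (f : α → M) (a b : α) :
    ∑ g : Perm α, f (g a) = ∑ g : Perm α, f (g b) := by
  simpa using Equiv.sum_comp (Equiv.mulRight (swap b a)) fun g : Perm α ↦ f (g b)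

end Orthogonality

section StandardRep

variable {n : ℕ}

lemma sum_sub_mul_ite_succ (f : Fin (n + 1) → R) (a : Fin (n + 1)) :
    ∑ k : Fin n, (f k.succ - f 0) * (if a = k.succ then 1 else 0) = f a - f 0 := by
  cases a using Fin.cases with
  | zero => simp [(Fin.succ_ne_zero _).symm]
  | succ a => simp

variable (R n) in
/-- The standard representation of `Perm (Fin (n + 1))`: the restriction of the permutation
representation to the vectors of coordinate sum zero, written in the basis `e j.succ - e 0`. The
coordinates of a sum-zero vector in this basis are its entries at the indices `i.succ`. -/
def standardRep : Perm (Fin (n + 1)) →* Matrix (Fin n) (Fin n) R where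
  toFun g := .of fun i j ↦
    (if g j.succ = i.succ then 1 else 0) - (if g 0 = i.succ then 1 else 0)
  map_one' := by
    ext i j
    simp [Matrix.one_apply, eq_comm]
  map_mul' g h := by
    ext i j
    have hsum := sum_sub_mul_ite_succ (R := R) fun k ↦ if g k = i.succ then 1 else 0
    simp only [Matrix.mul_apply, Matrix.of_apply, mul_sub, Finset.sum_sub_distrib, hsum,
      Perm.mul_apply]
    exact (sub_sub_sub_cancel_right _ _ _).symm

lemma standardRep_apply (g : Perm (Fin (n + 1))) (i j : Fin n) :
    standardRep R n g i j =
      (if g j.succ = i.succ then 1 else 0) - (if g 0 = i.succ then 1 else 0) :=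
  rfl

lemma sum_standardRep_eq_zero : ∑ g, standardRep R n g = 0 := by
  ext i j
  simp only [Matrix.sum_apply, standardRep_apply, Finset.sum_sub_distrib, Matrix.zero_apply]
  exact sub_eq_zero.mpr (sum_perm_apply_eq (fun k ↦ if k = i.succ then 1 else 0) j.succ 0)

lemma sum_signCharacter_smul_standardRep_eq_zero (hn : 2 ≤ n) :
    ∑ g, signCharacter R (Fin (n + 1)) g • standardRep R n g = 0 := by
  have hcard : 2 < Fintype.card (Fin (n + 1)) := by
    rw [Fintype.card_fin]
    lia
  ext i j
  simp only [Matrix.sum_apply, Matrix.smul_apply, standardRep_apply, smul_eq_mul, mul_sub,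
    Finset.sum_sub_distrib, Matrix.zero_apply,
    sum_signCharacter_mul_ite_apply_eq_zero hcard, sub_zero]

lemma standardRep_swap_mul_one_sub (i j : Fin n) :
    standardRep R n (swap i.succ j.succ) * (1 - standardRep R n (swap 0 j.succ)) =
      Matrix.single i j 1 + ∑ k, Matrix.single i k 1 := by
  have hzero : swap i.succ j.succ 0 = 0 :=
    swap_apply_of_ne_of_ne (Fin.succ_ne_zero i).symm (Fin.succ_ne_zero j).symm
  have hrow (a k : Fin n) : (∑ l, Matrix.single i l (1 : R)) a k = if i = a then 1 else 0 := by
    simp [Matrix.sum_apply, Matrix.single_apply, ite_and]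
  rw [mul_sub, mul_one, ← map_mul]
  ext a k
  rw [Matrix.add_apply, hrow, Matrix.sub_apply, standardRep_apply, standardRep_apply]
  obtain rfl | hkj := eq_or_ne j k
  · simp [hzero, Matrix.single_apply, (Fin.succ_ne_zero _).symm]
  · have hfix : swap 0 j.succ k.succ = k.succ :=
      swap_apply_of_ne_of_ne (Fin.succ_ne_zero k) (by simpa using hkj.symm)
    simp [hzero, hfix, hkj, (Fin.succ_ne_zero _).symm]

lemma lift_standardRep_surjective (hn : IsUnit ((n + 1 : ℕ) : R)) :
    Function.Surjective (lift R _ _ (standardRep R n)) := by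
  obtain ⟨c, hc⟩ := hn.exists_left_inv
  rw [← AlgHom.range_eq_top, eq_top_iff]
  set S := (lift R _ _ (standardRep R n)).range
  have hstd (g : Perm (Fin (n + 1))) : standardRep R n g ∈ S := ⟨single g 1, by simp⟩
  have hrankOne (i j : Fin n) : (Matrix.single i j 1 + ∑ k, Matrix.single i k 1) ∈ S := by
    rw [← standardRep_swap_mul_one_sub]
    exact mul_mem (hstd _) (sub_mem (one_mem S) (hstd _))
  have hrow (i : Fin n) : (∑ k, Matrix.single i k (1 : R)) ∈ S := by
    have hsum : ∑ k : Fin n, Matrix.single i k (1 : R) =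
        c • ∑ j : Fin n, (Matrix.single i j 1 + ∑ k, Matrix.single i k 1) := by
      rw [Finset.sum_add_distrib, Finset.sum_const, Finset.card_univ, Fintype.card_fin,
        ← succ_nsmul', ← Nat.cast_smul_eq_nsmul R, smul_smul, hc, one_smul]
    rw [hsum]
    exact S.smul_mem (sum_mem fun j _ ↦ hrankOne i j) c
  have hsingle (i j : Fin n) : Matrix.single i j (1 : R) ∈ S := by
    simpa using sub_mem (hrankOne i j) (hrow i)
  intro M _
  rw [Matrix.matrix_eq_sum_single M]
  refine sum_mem fun i _ ↦ sum_mem fun j _ ↦ ?_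
  simpa using S.smul_mem (hsingle i j) (M i j)

end StandardRep

section TrivialSignStandard

variable {n : ℕ}

variable (R n) in
/-- The direct sum of the trivial, sign and standard representations of `Perm (Fin (n + 1))`,
with one factor of the product for each summand. -/
def trivialSignStandardRep : Perm (Fin (n + 1)) →* R × R × Matrix (Fin n) (Fin n) R :=
  MonoidHom.prod 1 ((signCharacter R (Fin (n + 1))).prod (standardRep R n))

theorem lift_trivialSignStandardRep_surjective (hn : 2 ≤ n) (hR : IsUnit ((n + 1)! : R)) :
    Function.Surjective (lift R _ _ (trivialSignStandardRep R n)) := by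
  have : Nontrivial (Fin (n + 1)) := Fin.nontrivial_iff_two_le.mpr (by lia)
  have hcard : IsUnit (Fintype.card (Perm (Fin (n + 1))) : R) := by
    rwa [Fintype.card_perm, Fintype.card_fin]
  have hsucc : IsUnit ((n + 1 : ℕ) : R) :=
    isUnit_of_dvd_unit (Nat.cast_dvd_cast (Nat.dvd_factorial n.succ_pos le_rfl)) hR
  have hsign : ∑ g, signCharacter R (Fin (n + 1)) g⁻¹ • standardRep R n g = 0 := by
    simpa only [signCharacter_inv] using sum_signCharacter_smul_standardRep_eq_zero hn
  refine lift_prod_surjective _ _ hcard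
    (lift_prod_surjective _ _ hcard (lift_standardRep_surjective hsucc) hsign) ?_
  simp [Prod.ext_iff, Prod.fst_sum, Prod.snd_sum, sum_signCharacter_eq_zero,
    sum_standardRep_eq_zero]

end TrivialSignStandard

theorem group_algebra_sym3_general (hR : IsUnit (6 : R)) :
    Nonempty (MonoidAlgebra R (Perm (Fin 3)) ≃ₐ[R] R × R × Matrix (Fin 2) (Fin 2) R) := by
  have : Module.Finite R (MonoidAlgebra R (Perm (Fin 3))) := .of_basis (basis _ R)
  have hsurj : Function.Surjective (lift R _ _ (trivialSignStandardRep R 2)) :=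
    lift_trivialSignStandardRep_surjective le_rfl (by simpa [Nat.factorial] using hR)
  have hrank : Module.finrank R (MonoidAlgebra R (Perm (Fin 3))) ≤
      Module.finrank R (R × R × Matrix (Fin 2) (Fin 2) R) := by
    cases subsingleton_or_nontrivial R
    · simp [Module.finrank_subsingleton]
    · rw [Module.finrank_eq_card_basis (basis _ R)]
      simp [Module.finrank_matrix, Fintype.card_perm, Nat.factorial]
  exact ⟨.ofBijective _ (OrzechProperty.bijective_of_surjective_of_finrank_le
    (lift R _ _ (trivialSignStandardRep R 2)).toLinearMap hsurj hrank)⟩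

theorem group_algebra_sym3 :
    Nonempty (MonoidAlgebra ℝ (Equiv.Perm (Fin 3)) ≃ₐ[ℝ]
      ℝ × ℝ × Matrix (Fin 2) (Fin 2) ℝ) :=
  group_algebra_sym3_general (by norm_num)
end
end

section
/- The real group algebra of the quaternion group Q₈ of order 8 is isomorphic, as an ℝ-algebra, to the product ℝ × ℝ × ℝ × ℝ × ℍ, where ℍ denotes the algebra of real quaternions. -/
noncomputable section

/-!
Let `Q₈` have generators `a`, `x`. Over a ring in which `2` is invertible, the central element `a²`
splits the group algebra by the idempotents `(1 ± a²) / 2`. On the first summand the group acts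
through `Q₈ / {±1}`, a Klein four-group, whose four sign characters give four copies of the base
ring; on the second `a² = -1`, and `a`, `x` become the quaternions `i`, `j`. The resulting map is
onto because the two idempotents and the inverse of the character table of the Klein four-group are
available in its range; both sides being free of rank `8`, it is an isomorphism.
-/

open Quaternion

section DicyclicPair

/-- A pair of elements of a monoid satisfying the relations of the presentation
`⟨a, x | a ^ (2 * n) = 1, x ^ 2 = a ^ n, x⁻¹ * a * x = a⁻¹⟩` of `QuaternionGroup n`. The last
relation is written without inverses, so that it makes sense in the multiplicative monoid of a
ring. -/
structure IsDicyclicPair {M : Type*} [Monoid M] (n : ℕ) (a x : M) : Prop where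
  pow_two_mul : a ^ (2 * n) = 1
  sq_eq_pow : x ^ 2 = a ^ n
  mul_mul_eq : a * x * a = x

theorem pow_zmodVal_add {M : Type*} [Monoid M] {m : ℕ} [NeZero m] {a : M} (ha : a ^ m = 1)
    (i j : ZMod m) : a ^ (i + j).val = a ^ i.val * a ^ j.val := by
  rw [ZMod.val_add, ← pow_eq_pow_mod _ ha, pow_add]

theorem pow_zmodVal_natCast {M : Type*} [Monoid M] {m : ℕ} {a : M} (ha : a ^ m = 1) (k : ℕ) :
    a ^ (k : ZMod m).val = a ^ k := by
  rw [ZMod.val_natCast, ← pow_eq_pow_mod _ ha]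

theorem isDicyclicPair_two_of_sq_eq_one {M : Type*} [CommMonoid M] {a x : M} (ha : a ^ 2 = 1)
    (hx : x ^ 2 = 1) : IsDicyclicPair 2 a x where
  pow_two_mul := by rw [pow_mul, ha, one_pow]
  sq_eq_pow := hx.trans ha.symm
  mul_mul_eq := by rw [mul_right_comm, ← sq, ha, one_mul]

theorem isDicyclicPair_two_quaternionBasis {R A : Type*} [CommRing R] [Ring A] [Algebra R A]
    (q : QuaternionAlgebra.Basis A (-1 : R) 0 (-1)) : IsDicyclicPair 2 q.i q.j := by
  have i_sq : q.i ^ 2 = -1 := by simp [sq]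
  have j_sq : q.j ^ 2 = -1 := by simp [sq]
  exact
    { pow_two_mul := by rw [pow_mul, i_sq, neg_one_sq]
      sq_eq_pow := j_sq.trans i_sq.symm
      mul_mul_eq := by simp }

namespace IsDicyclicPair

variable {M N : Type*} [Monoid M] [Monoid N] {n : ℕ}

theorem prodMk {a x : M} {b y : N} (h : IsDicyclicPair n a x) (h' : IsDicyclicPair n b y) :
    IsDicyclicPair n (a, b) (x, y) where
  pow_two_mul := Prod.ext h.pow_two_mul h'.pow_two_mul
  sq_eq_pow := Prod.ext h.sq_eq_pow h'.sq_eq_pow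
  mul_mul_eq := Prod.ext h.mul_mul_eq h'.mul_mul_eq

variable {a x : M}

theorem pow_mul_mul_pow (h : IsDicyclicPair n a x) (k : ℕ) : a ^ k * x * a ^ k = x := by
  induction k with
  | zero => simp
  | succ k ih =>
    calc a ^ (k + 1) * x * a ^ (k + 1)
        = a ^ k * a * x * (a * a ^ k) := by rw [← pow_succ, ← pow_succ']
      _ = a ^ k * (a * x * a) * a ^ k := by simp only [mul_assoc]
      _ = x := by rw [h.mul_mul_eq, ih]

theorem pow_mul_mul_pow_zmodVal [NeZero n] (h : IsDicyclicPair n a x) (i j : ZMod (2 * n)) :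
    a ^ i.val * (x * a ^ j.val) = x * a ^ (j - i).val := by
  calc a ^ i.val * (x * a ^ j.val)
      = a ^ i.val * (x * a ^ (i + (j - i)).val) := by rw [add_sub_cancel]
    _ = a ^ i.val * x * a ^ i.val * a ^ (j - i).val := by
      rw [pow_zmodVal_add h.pow_two_mul]; simp only [mul_assoc]
    _ = x * a ^ (j - i).val := by rw [h.pow_mul_mul_pow]

/-- The monoid homomorphism from `QuaternionGroup n` determined by the images `a`, `x` of its
generators: the universal property of the presentation. -/
def lift [NeZero n] (h : IsDicyclicPair n a x) : QuaternionGroup n →* M where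
  toFun
    | .a i => a ^ i.val
    | .xa i => x * a ^ i.val
  map_one' := by
    change a ^ (0 : ZMod (2 * n)).val = 1
    rw [ZMod.val_zero, pow_zero]
  map_mul' := by
    rintro (i | i) (j | j)
    · exact pow_zmodVal_add h.pow_two_mul i j
    · exact (h.pow_mul_mul_pow_zmodVal i j).symm
    · exact (congrArg (x * ·) (pow_zmodVal_add h.pow_two_mul i j)).trans (mul_assoc ..).symm
    · calc a ^ ((n : ZMod (2 * n)) + j - i).val
          = x ^ 2 * a ^ (j - i).val := by
            rw [add_sub_assoc, pow_zmodVal_add h.pow_two_mul, pow_zmodVal_natCast h.pow_two_mul,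
              h.sq_eq_pow]
        _ = x * a ^ i.val * (x * a ^ j.val) := by
            rw [mul_assoc x (a ^ i.val), h.pow_mul_mul_pow_zmodVal, sq, mul_assoc]

theorem lift_a_one [NeZero n] (h : IsDicyclicPair n a x) : h.lift (.a 1) = a := by
  change a ^ (1 : ZMod (2 * n)).val = a
  rw [← Nat.cast_one, pow_zmodVal_natCast h.pow_two_mul, pow_one]

theorem lift_xa_zero [NeZero n] (h : IsDicyclicPair n a x) : h.lift (.xa 0) = x := by
  change x * a ^ (0 : ZMod (2 * n)).val = x
  rw [ZMod.val_zero, pow_zero, mul_one]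

end IsDicyclicPair

theorem IsDicyclicPair.monoidAlgebraLift_surjective {R A : Type*} [CommSemiring R] [Semiring A]
    [Algebra R A] {n : ℕ} [NeZero n] {a x : A} (h : IsDicyclicPair n a x)
    (hgen : Algebra.adjoin R {a, x} = ⊤) :
    Function.Surjective (MonoidAlgebra.lift R A (QuaternionGroup n) h.lift) := by
  rw [← AlgHom.range_eq_top, eq_top_iff, ← hgen, Algebra.adjoin_le_iff, Set.pair_subset_iff]
  exact ⟨⟨.of R _ (.a 1), (MonoidAlgebra.lift_of ..).trans h.lift_a_one⟩,
    ⟨.of R _ (.xa 0), (MonoidAlgebra.lift_of ..).trans h.lift_xa_zero⟩⟩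

end DicyclicPair

theorem linearCombination_mem_adjoin_pair {R A : Type*} [CommSemiring R] [Semiring A] [Algebra R A]
    (a x : A) (c₀ c₁ c₂ c₃ : R) :
    c₀ • 1 + c₁ • a + c₂ • x + c₃ • (a * x) ∈ Algebra.adjoin R {a, x} := by
  have a_mem : a ∈ Algebra.adjoin R {a, x} := Algebra.subset_adjoin (Set.mem_insert _ _)
  have x_mem : x ∈ Algebra.adjoin R {a, x} :=
    Algebra.subset_adjoin (Set.mem_insert_of_mem _ rfl)
  exact add_mem (add_mem (add_mem (Subalgebra.smul_mem _ (one_mem _) c₀)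
    (Subalgebra.smul_mem _ a_mem c₁)) (Subalgebra.smul_mem _ x_mem c₂))
    (Subalgebra.smul_mem _ (mul_mem a_mem x_mem) c₃)

section WedderburnGenerators

variable {R H : Type*} [CommRing R] [Ring H] [Algebra R H]
  (q : QuaternionAlgebra.Basis H (-1 : R) 0 (-1))

/-- The image of the generator `a` of `Q₈`: its values under the four sign characters, and the
quaternion unit `i`. -/
def wedderburnA : R × R × R × R × H := (1, 1, -1, -1, q.i)

/-- The image of the generator `x` of `Q₈`: its values under the four sign characters, in the same
order as for `wedderburnA`, and the quaternion unit `j`. -/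
def wedderburnX : R × R × R × R × H := (1, -1, 1, -1, q.j)

theorem isDicyclicPair_wedderburnA_wedderburnX :
    IsDicyclicPair 2 (wedderburnA q) (wedderburnX q) := by
  have sign {ε δ : R} (hε : ε ^ 2 = 1) (hδ : δ ^ 2 = 1) := isDicyclicPair_two_of_sq_eq_one hε hδ
  exact (sign (one_pow 2) (one_pow 2)).prodMk <| (sign (one_pow 2) neg_one_sq).prodMk <|
    (sign neg_one_sq (one_pow 2)).prodMk <| (sign neg_one_sq neg_one_sq).prodMk <|
    isDicyclicPair_two_quaternionBasis q

theorem wedderburnA_sq : wedderburnA q ^ 2 = (1, 1, 1, 1, -1) := by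
  simp [wedderburnA, sq]

theorem wedderburnA_mul_wedderburnX :
    wedderburnA q * wedderburnX q = (1, -1, -1, 1, q.k) := by
  simp [wedderburnA, wedderburnX]

variable [Invertible (2 : R)]

theorem half_one_add_wedderburnA_sq :
    (⅟2 : R) • (1 + wedderburnA q ^ 2) = (1, 1, 1, 1, 0) := by
  rw [wedderburnA_sq]
  ext <;> simp

theorem signIdempotent_mem_adjoin :
    (1, 1, 1, 1, 0) ∈ Algebra.adjoin R {wedderburnA q, wedderburnX q} := by
  rw [← half_one_add_wedderburnA_sq q]
  exact Subalgebra.smul_mem _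
    (add_mem (one_mem _) (pow_mem (Algebra.subset_adjoin (Set.mem_insert _ _)) 2)) _

theorem signs_mem_adjoin (t u v w : R) :
    (t, u, v, w, 0) ∈ Algebra.adjoin R {wedderburnA q, wedderburnX q} := by
  have character_inversion : (t, u, v, w, 0) = (⅟2 * ⅟2 : R) • ((1, 1, 1, 1, 0) *
      ((t + u + v + w) • 1 + (t + u - v - w) • wedderburnA q + (t - u + v - w) • wedderburnX q +
        (t - u - v + w) • (wedderburnA q * wedderburnX q))) := by
    have half : (⅟2 : R) * 2 = 1 := invOf_mul_self 2
    rw [wedderburnA_mul_wedderburnX]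
    ext <;> simp [wedderburnA, wedderburnX] <;> grind
  rw [character_inversion]
  exact Subalgebra.smul_mem _
    (mul_mem (signIdempotent_mem_adjoin q) (linearCombination_mem_adjoin_pair _ _ _ _ _ _)) _

theorem quaternion_mem_adjoin (h : ℍ[R,-1,0,-1]) :
    (0, 0, 0, 0, q.lift h) ∈ Algebra.adjoin R {wedderburnA q, wedderburnX q} := by
  have basis_expansion : (0, 0, 0, 0, q.lift h) = (1 - (1, 1, 1, 1, 0)) *
      (h.re • 1 + h.imI • wedderburnA q + h.imJ • wedderburnX q +
        h.imK • (wedderburnA q * wedderburnX q)) := by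
    rw [wedderburnA_mul_wedderburnX]
    ext <;> simp [wedderburnA, wedderburnX, QuaternionAlgebra.Basis.lift,
      Algebra.algebraMap_eq_smul_one]
  rw [basis_expansion]
  exact mul_mem (sub_mem (one_mem _) (signIdempotent_mem_adjoin q))
    (linearCombination_mem_adjoin_pair _ _ _ _ _ _)

theorem adjoin_wedderburnA_wedderburnX (hq : Function.Surjective q.lift) :
    Algebra.adjoin R {wedderburnA q, wedderburnX q} = ⊤ := by
  refine eq_top_iff.mpr fun ⟨t, u, v, w, y⟩ _ ↦ ?_
  obtain ⟨h, rfl⟩ := hq y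
  simpa using add_mem (signs_mem_adjoin q t u v w) (quaternion_mem_adjoin q h)

end WedderburnGenerators

theorem quaternionBasis_lift_self {R : Type*} [CommRing R] {c₁ c₂ c₃ : R}
    (h : ℍ[R,c₁,c₂,c₃]) : (QuaternionAlgebra.Basis.self R).lift h = h := by
  ext <;> simp [QuaternionAlgebra.Basis.lift]

theorem finrank_monoidAlgebra_quaternionGroup_two (R : Type*) [CommRing R] :
    Module.finrank R (MonoidAlgebra R (QuaternionGroup 2)) =
      Module.finrank R (R × R × R × R × ℍ[R]) := by
  cases subsingleton_or_nontrivial R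
  · simp only [Module.finrank_subsingleton]
  · rw [Module.finrank_eq_card_basis (MonoidAlgebra.basis _ R), QuaternionGroup.card]
    simp [Quaternion.finrank_eq_four]

theorem group_algebra_quaternion_group_general (R : Type*) [CommRing R] [Invertible (2 : R)] :
    Nonempty (MonoidAlgebra R (QuaternionGroup 2) ≃ₐ[R] R × R × R × R × ℍ[R]) := by
  let q : QuaternionAlgebra.Basis ℍ[R] (-1 : R) 0 (-1) := .self R
  let pair := isDicyclicPair_wedderburnA_wedderburnX q
  let φ := MonoidAlgebra.lift R _ _ pair.lift
  have φ_surjective : Function.Surjective φ := pair.monoidAlgebraLift_surjective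
    (adjoin_wedderburnA_wedderburnX q fun h ↦ ⟨h, quaternionBasis_lift_self h⟩)
  have φ_bijective : Function.Bijective φ := by
    have : Module.Finite R (MonoidAlgebra R (QuaternionGroup 2)) :=
      .of_basis (MonoidAlgebra.basis _ R)
    have : Module.Free R (MonoidAlgebra R (QuaternionGroup 2)) :=
      .of_basis (MonoidAlgebra.basis _ R)
    exact OrzechProperty.bijective_of_surjective_of_finrank_le φ.toLinearMap φ_surjective
      (finrank_monoidAlgebra_quaternionGroup_two R).le
  exact ⟨.ofBijective φ φ_bijective⟩

theorem group_algebra_quaternion_group :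
    Nonempty (MonoidAlgebra ℝ (QuaternionGroup 2) ≃ₐ[ℝ]
      ℝ × ℝ × ℝ × ℝ × Quaternion ℝ) :=
  group_algebra_quaternion_group_general ℝ
end
end

section
/- The real group algebra ℝ[G] of the group G is isomorphic, as an ℝ-algebra, to the product ℝ × ℝ × M₂(ℝ) × M₂(ℂ) × M₃(ℝ) × M₃(ℝ) × M₄(ℝ), where Mₙ(ℝ) and M₂(ℂ) denote the indicated real and complex matrix algebras (M₂(ℂ) regarded as an ℝ-algebra). -/
open Matrix Complex
open scoped MatrixGroups

noncomputable section

def iM : Matrix (Fin 2) (Fin 2) ℂ := !![0, 1; -1, 0]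
def jM : Matrix (Fin 2) (Fin 2) ℂ := !![0, Complex.I; Complex.I, 0]
def kM : Matrix (Fin 2) (Fin 2) ℂ := !![Complex.I, 0; 0, -Complex.I]
def wM : Matrix (Fin 2) (Fin 2) ℂ :=
  (1 / 2 : ℂ) • !![-1 + Complex.I, 1 + Complex.I; -1 + Complex.I, -1 - Complex.I]
def cM : Matrix (Fin 2) (Fin 2) ℂ :=
  ((Real.sqrt 2 : ℂ))⁻¹ • !![-Complex.I, Complex.I; Complex.I, Complex.I]
def dM : Matrix (Fin 2) (Fin 2) ℂ :=
  ((Real.sqrt 2 : ℂ))⁻¹ • !![-1, 1; 1, 1]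

def G : Subgroup (GL (Fin 2) ℂ) :=
  Subgroup.closure {g : GL (Fin 2) ℂ |
    (g : Matrix (Fin 2) (Fin 2) ℂ) = iM ∨
    (g : Matrix (Fin 2) (Fin 2) ℂ) = wM ∨
    (g : Matrix (Fin 2) (Fin 2) ℂ) = dM}

/-!
`G` is a copy of `GL₂(𝔽₃)` which, after a change of basis, has entries in `ℤ[√-2]`. Its irreducible
real representations can then be read off from `GL₂(ℤ[√-2])`: the inclusion into `GL₂(ℂ)`, the
Steinberg representations of the reductions modulo `√-2` and `1 - √-2` (residue fields `𝔽₂` and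
`𝔽₃`), the odd functions on `𝔽₃²`, and the twists of `1` and of the second Steinberg representation
by the quadratic character of the determinant modulo `1 - √-2`.

Add up the traces of these seven representations with the multiplicities they have in the regular
representation. The result vanishes on every `g ≠ 1` and is `48` at `1`, so, evaluated at the image
of `x : ℝ[G]`, it is `48` times the coefficient of `x` at `1`; applied to all translates of `x` this
shows that `ℝ[G]` embeds into the product of the seven matrix algebras, which also has dimension
`48`.
-/

section GroupAlgebra

theorem map_lift_eq_mul_coeff_one {k M A : Type*} [CommSemiring k] [Monoid M] [Semiring A]
    [Algebra k A] (ρ : M →* A) (τ : A →ₗ[k] k) (hτ : ∀ g ≠ 1, τ (ρ g) = 0)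
    (x : MonoidAlgebra k M) : τ (MonoidAlgebra.lift k A M ρ x) = τ 1 * x.coeff 1 := by
  induction x using MonoidAlgebra.induction_linear with
  | zero => simp
  | add x y hx hy =>
    simp only [map_add, hx, hy, MonoidAlgebra.coeff_add, Finsupp.add_apply, mul_add]
  | single g r =>
    obtain rfl | hg := eq_or_ne g 1
    · simp [mul_comm]
    · simp [hτ g hg, hg]

theorem lift_injective_of_map_eq_zero {k Γ A : Type*} [CommRing k] [NoZeroDivisors k] [Group Γ]
    [Ring A] [Algebra k A] (ρ : Γ →* A) (τ : A →ₗ[k] k) (hτ_one : τ 1 ≠ 0)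
    (hτ : ∀ g ≠ 1, τ (ρ g) = 0) : Function.Injective (MonoidAlgebra.lift k A Γ ρ) := by
  rw [injective_iff_map_eq_zero]
  intro x hx
  ext g
  have hg := map_lift_eq_mul_coeff_one ρ τ hτ (MonoidAlgebra.single g⁻¹ 1 * x)
  rw [map_mul, hx, mul_zero, map_zero, MonoidAlgebra.coeff_single_mul_apply] at hg
  simpa [hτ_one] using hg

theorem finrank_monoidAlgebra (k M : Type*) [Semiring k] [StrongRankCondition k] [Finite M] :
    Module.finrank k (MonoidAlgebra k M) = Nat.card M := by
  have := Fintype.ofFinite M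
  rw [(MonoidAlgebra.coeffLinearEquiv k).finrank_eq, Module.finrank_finsupp_self,
    Nat.card_eq_fintype_card]

theorem lift_bijective_of_map_eq_zero {k Γ A : Type*} [Field k] [Group Γ] [Finite Γ] [Ring A]
    [Algebra k A] [FiniteDimensional k A] (ρ : Γ →* A) (τ : A →ₗ[k] k) (hτ_one : τ 1 ≠ 0)
    (hτ : ∀ g ≠ 1, τ (ρ g) = 0) (hA : Module.finrank k A = Nat.card Γ) :
    Function.Bijective (MonoidAlgebra.lift k A Γ ρ) :=
  have hinj := lift_injective_of_map_eq_zero ρ τ hτ_one hτ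
  ⟨hinj, (LinearMap.injective_iff_surjective_of_finrank_eq_finrank
    ((finrank_monoidAlgebra k Γ).trans hA.symm)
    (f := (MonoidAlgebra.lift k A Γ ρ).toLinearMap)).1 hinj⟩

end GroupAlgebra

open scoped Pointwise in
theorem closure_subset_of_mul_mem {Γ : Type*} [Group Γ] {S T : Set Γ} (hT : T.Finite)
    (one_mem : 1 ∈ T) (mul_mem : ∀ s ∈ S, ∀ t ∈ T, s * t ∈ T) :
    (Subgroup.closure S : Set Γ) ⊆ T := by
  have hle : Subgroup.closure S ≤ MulAction.stabilizer Γ T := by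
    rw [Subgroup.closure_le]
    exact fun s hs ↦ (MulAction.mem_stabilizer_set' hT).2 fun {t} ht ↦ mul_mem s hs t ht
  intro g hg
  simpa using (MulAction.mem_stabilizer_set' hT).1 (hle hg) one_mem

/-- A quotient of the permutation module `R[X]` by an `M`-stable submodule, together with a basis
consisting of the images of the points `point q`. The class of a point `x` has coordinates
`coord x`; `sum_coord_smul` says that the action of `M` descends to the quotient. -/
structure PermutationQuotient (M X ι R : Type*) [Monoid M] [MulAction M X] [Fintype ι]
    [DecidableEq ι] [Semiring R] where
  coord : X → ι → R
  point : ι → X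
  coord_point (q : ι) : coord (point q) = Pi.single q 1
  sum_coord_smul (m : M) (x : X) : ∑ q, coord x q • coord (m • point q) = coord (m • x)

theorem sum_onePoint {ι N : Type*} [Fintype ι] [AddCommMonoid N] (f : OnePoint ι → N) :
    ∑ x, f x = f OnePoint.infty + ∑ i : ι, f i :=
  Fintype.sum_option f

namespace PermutationQuotient

variable {M X ι R : Type*} [Fintype ι] [DecidableEq ι]

/-- The action of `M` on the quotient, as matrices in the given basis. -/
def rep [Monoid M] [MulAction M X] [CommSemiring R] (Q : PermutationQuotient M X ι R) :
    M →* Matrix ι ι R where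
  toFun m := .of fun p q ↦ Q.coord (m • Q.point q) p
  map_one' := by
    ext p q
    simp [Q.coord_point, Matrix.one_apply, Pi.single_apply]
  map_mul' m n := by
    ext p q
    simp only [Matrix.of_apply, Matrix.mul_apply, mul_smul, ← Q.sum_coord_smul m (n • Q.point q),
      Finset.sum_apply, Pi.smul_apply, smul_eq_mul, mul_comm]

/-- The quotient of `R[ι ∪ {∞}]` by the line spanned by the sum of all points; the points other
than `∞` form a basis. -/
def moduloSum [Group M] [MulAction M (OnePoint ι)] [Ring R] :
    PermutationQuotient M (OnePoint ι) ι R where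
  coord x := x.elim (-1) fun p ↦ Pi.single p 1
  point p := p
  coord_point q := by rw [OnePoint.elim_some]
  sum_coord_smul m x := by
    let c : OnePoint ι → ι → R := fun x ↦ x.elim (-1) fun p ↦ Pi.single p 1
    have sum_c_smul : c (m • OnePoint.infty) + ∑ q : ι, c (m • (q : OnePoint ι)) = 0 := calc
      _ = ∑ y, c (m • y) := (sum_onePoint fun y ↦ c (m • y)).symm
      _ = ∑ y, c y := Equiv.sum_comp (MulAction.toPerm m) c
      _ = -1 + ∑ q : ι, Pi.single q 1 := sum_onePoint c
      _ = 0 := by ext p; simp [Pi.single_apply]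
    induction x using OnePoint.rec with
    | infty => simpa [c] using (eq_neg_of_add_eq_zero_left sum_c_smul).symm
    | coe p => simp [Pi.single_apply]

/-- The quotient of `R[X]` by the relations `[-x] = -[x]` and `[0] = 0`, with basis a system `v` of
representatives of the nonzero points up to sign. -/
def moduloNeg [Monoid M] [AddGroup X] [DistribMulAction M X] [DecidableEq X] [Ring R]
    (v : ι → X) (v_injective : Function.Injective v) (v_ne_neg : ∀ p q, v p ≠ -v q)
    (exists_eq_or_neg : ∀ x, x = 0 ∨ ∃ p, x = v p ∨ x = -v p) :
    PermutationQuotient M X ι R where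
  coord x p := (if x = v p then 1 else 0) - (if x = -v p then 1 else 0)
  point := v
  coord_point q := by
    ext p
    simp [v_ne_neg q p, v_injective.eq_iff, Pi.single_apply, eq_comm]
  sum_coord_smul m x := by
    ext p
    obtain rfl | ⟨q, rfl | rfl⟩ := exists_eq_or_neg x
    · simp [eq_comm (a := (0 : X))]
    · simp [v_ne_neg, v_injective.eq_iff, ite_apply]
    · simp [v_ne_neg, v_injective.eq_iff, neg_eq_iff_eq_neg, ite_apply]

end PermutationQuotient

/-- The Steinberg representation of `GL₂(𝔽_p)`: functions on the projective line, modulo the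
constants. -/
def steinbergRep (p : ℕ) [Fact p.Prime] : GL (Fin 2) (ZMod p) →* Matrix (Fin p) (Fin p) ℤ :=
  haveI : NeZero p := ⟨(Fact.out : p.Prime).ne_zero⟩
  (Matrix.reindexAlgEquiv ℤ ℤ (ZMod.finEquiv p).symm.toEquiv : _ →* _).comp
    (PermutationQuotient.moduloSum (ι := ZMod p) (R := ℤ)).rep

/-- The representation of `GL₂(𝔽₃)` on odd functions on `𝔽₃²`. -/
def oddRep : GL (Fin 2) (ZMod 3) →* Matrix (Fin 4) (Fin 4) ℤ :=
  (PermutationQuotient.moduloNeg (X := Fin 2 → ZMod 3) ![![1, 0], ![1, 1], ![1, 2], ![0, 1]]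
    (by decide) (by decide) (by decide)).rep

/-- The twist of a representation `ρ` by a character `χ`. -/
def twist {M R A : Type*} [Monoid M] [CommSemiring R] [Semiring A] [Algebra R A] (χ : M →* R)
    (ρ : M →* A) : M →* A where
  toFun m := χ m • ρ m
  map_one' := by simp
  map_mul' m n := by rw [map_mul, map_mul, smul_mul_smul_comm]

/-- The product of matrix algebras of the theorem is `Blocks ℝ ℂ`; the integral representations
take values in `Blocks ℤ ℤ[√-2]`. -/
abbrev Blocks (R S : Type*) : Type _ :=
  R × R × Matrix (Fin 2) (Fin 2) R × Matrix (Fin 2) (Fin 2) S × Matrix (Fin 3) (Fin 3) R ×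
    Matrix (Fin 3) (Fin 3) R × Matrix (Fin 4) (Fin 4) R

namespace Blocks

section

variable {R S R' S' : Type*} [CommRing R] [Ring S] [CommRing R'] [Ring S']

/-- Extension of scalars in every block. -/
def map (f : R →+* R') (g : S →+* S') : Blocks R S →+* Blocks R' S' :=
  f.prodMap <| f.prodMap <| f.mapMatrix.prodMap <| g.mapMatrix.prodMap <|
    f.mapMatrix.prodMap <| f.mapMatrix.prodMap f.mapMatrix

/-- The sum of the traces of the blocks, weighted by their multiplicities in the regular
representation. The block over `S` stands for two conjugate representations, whose traces add up to
`2 * re`. -/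
def regularTrace [Module R S] (re : S →ₗ[R] R) : Blocks R S →ₗ[R] R where
  toFun x := x.1 + x.2.1 + 2 * x.2.2.1.trace + 4 * re x.2.2.2.1.trace +
    3 * x.2.2.2.2.1.trace + 3 * x.2.2.2.2.2.1.trace + 4 * x.2.2.2.2.2.2.trace
  map_add' x y := by simp only [Prod.fst_add, Prod.snd_add, Matrix.trace_add, map_add]; ring
  map_smul' r x := by
    simp only [Prod.smul_fst, Prod.smul_snd, Matrix.trace_smul, map_smul, smul_eq_mul,
      RingHom.id_apply]
    ring

theorem regularTrace_map [Module R S] [Module R' S'] (f : R →+* R') (g : S →+* S')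
    {re : S →ₗ[R] R} {re' : S' →ₗ[R'] R'} (h : ∀ s, re' (g s) = f (re s)) (x : Blocks R S) :
    regularTrace re' (map f g x) = f (regularTrace re x) := by
  simp [regularTrace, map, ← AddMonoidHom.map_trace, h, map_ofNat f]

end

theorem regularTrace_reLm_one : regularTrace reLm (1 : Blocks ℝ ℂ) = 48 := by
  norm_num [regularTrace]

theorem finrank_real_complex : Module.finrank ℝ (Blocks ℝ ℂ) = 48 := by
  simp [Module.finrank_prod, Module.finrank_matrix]

end Blocks

local notation "ℤ[√-2]" => Zsqrtd (-2)

open Zsqrtd (sqrtd)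

theorem ofReal_sqrt_two_sq : (Real.sqrt 2 : ℂ) ^ 2 = 2 := by
  exact_mod_cast Real.sq_sqrt zero_le_two

theorem ofReal_sqrt_two_inv : (Real.sqrt 2 : ℂ)⁻¹ = Real.sqrt 2 / 2 := by
  rw [inv_eq_iff_eq_inv, inv_div, eq_div_iff (by simp), ← sq, ofReal_sqrt_two_sq]

/-- The embedding of `ℤ[√-2]` into `ℂ`. -/
def toComplex : ℤ[√-2] →+* ℂ :=
  Zsqrtd.lift ⟨I * Real.sqrt 2, by
    rw [← sq, mul_pow, I_sq, ofReal_sqrt_two_sq]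
    norm_num⟩

theorem toComplex_injective : Function.Injective toComplex :=
  Zsqrtd.lift_injective _ fun n h ↦ by nlinarith

theorem toComplex_sqrtd : toComplex sqrtd = I * Real.sqrt 2 := by
  simp [toComplex]

theorem toComplex_two : toComplex 2 = 2 := map_ofNat toComplex 2

theorem re_toComplex (z : ℤ[√-2]) : (toComplex z).re = z.re := by
  simp [toComplex]

/-- The real part on `ℤ[√-2]`. -/
def reInt : ℤ[√-2] →ₗ[ℤ] ℤ where
  toFun := Zsqrtd.re
  map_add' _ _ := rfl
  map_smul' := by simp

/-- The matrix of `iM` in the basis given by `basisChange`. -/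
def iInt : GL (Fin 2) ℤ[√-2] :=
  ⟨!![-1, -sqrtd; -sqrtd, 1], !![1, sqrtd; sqrtd, -1], by decide, by decide⟩

/-- The matrix of `wM` in the basis given by `basisChange`. -/
def wInt : GL (Fin 2) ℤ[√-2] :=
  ⟨!![0, -1; 1, -1], !![-1, 1; -1, 0], by decide, by decide⟩

/-- The matrix of `dM` in the basis given by `basisChange`. -/
def dInt : GL (Fin 2) ℤ[√-2] :=
  ⟨!![2, sqrtd - 1; sqrtd + 1, -2], !![2, sqrtd - 1; sqrtd + 1, -2], by decide, by decide⟩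

/-- The integral form of `G`. -/
def integralG : Subgroup (GL (Fin 2) ℤ[√-2]) := Subgroup.closure {iInt, wInt, dInt}

section Elements

/-- The normal form of an element of `integralG = Q₈ ⋊ S₃`: here `iInt` and its conjugate by `wInt`
generate `Q₈`, while `wInt` and `dInt` generate `S₃`. -/
def word (x : Fin 4 × Fin 2 × Fin 3 × Fin 2) : GL (Fin 2) ℤ[√-2] :=
  iInt ^ (x.1 : ℕ) * (wInt * iInt * wInt⁻¹) ^ (x.2.1 : ℕ) * wInt ^ (x.2.2.1 : ℕ) *
    dInt ^ (x.2.2.2 : ℕ)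

set_option maxRecDepth 10000 in
theorem word_injective : Function.Injective word := by decide +kernel

theorem exists_word_eq_mul_word :
    ∀ s ∈ [iInt, wInt, dInt], ∀ x, ∃ y, word y = s * word x := by decide +kernel

theorem word_mem_integralG (x : Fin 4 × Fin 2 × Fin 3 × Fin 2) : word x ∈ integralG := by
  have hi : iInt ∈ integralG := Subgroup.subset_closure (by simp)
  have hw : wInt ∈ integralG := Subgroup.subset_closure (by simp)
  have hd : dInt ∈ integralG := Subgroup.subset_closure (by simp)
  exact mul_mem (mul_mem (mul_mem (pow_mem hi _)
    (pow_mem (mul_mem (mul_mem hw hi) (inv_mem hw)) _)) (pow_mem hw _)) (pow_mem hd _)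

theorem coe_integralG : (integralG : Set (GL (Fin 2) ℤ[√-2])) = Set.range word := by
  refine (closure_subset_of_mul_mem (Set.finite_range word) ⟨0, by simp [word]⟩ ?_).antisymm
    (Set.range_subset_iff.2 word_mem_integralG)
  rintro s hs _ ⟨x, rfl⟩
  exact exists_word_eq_mul_word s (by simpa using hs) x

theorem card_integralG : Nat.card integralG = 48 := calc
  Nat.card integralG = Nat.card (Set.range word) := by rw [← coe_integralG]; rfl
  _ = Nat.card (Fin 4 × Fin 2 × Fin 3 × Fin 2) := Nat.card_range_of_injective word_injective
  _ = 48 := by simp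

end Elements

section Conjugation

theorem map_of_fin_two {α β : Type*} (f : α → β) (a b c d : α) :
    (!![a, b; c, d]).map f = !![f a, f b; f c, f d] := by
  ext i j
  fin_cases i <;> fin_cases j <;> rfl

theorem smul_of_fin_two {R α : Type*} [SMul R α] (r : R) (a b c d : α) :
    r • !![a, b; c, d] = !![r • a, r • b; r • c, r • d] := by
  simp

theorem of_fin_two_inj {α : Type*} {a b c d a' b' c' d' : α} :
    !![a, b; c, d] = !![a', b'; c', d'] ↔ (a = a' ∧ b = b') ∧ c = c' ∧ d = d' := by
  simp

/-- The change of basis which makes `G` integral. It is determined up to a scalar by the equations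
`basisChange_mul_iInt`, `basisChange_mul_wInt` and `basisChange_mul_dInt`. -/
def basisChange : GL (Fin 2) ℂ :=
  Matrix.GeneralLinearGroup.mkOfDetNeZero
    !![2, -1 + (1 + Real.sqrt 2) * I;
      Real.sqrt 2 * (1 + I), -1 + (1 - Real.sqrt 2) * I] <| by
    have hdet : Matrix.det !![2, -1 + (1 + Real.sqrt 2) * I;
        Real.sqrt 2 * (1 + I), -1 + (1 - Real.sqrt 2) * I] = Real.sqrt 2 * 2 * (1 - I) := by
      rw [det_fin_two_of]
      linear_combination (-I - I ^ 2) * ofReal_sqrt_two_sq + (-Real.sqrt 2 - 2) * I_sq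
    have one_sub_I_ne_zero : 1 - I ≠ 0 := fun h ↦ by simpa using congrArg Complex.re h
    rw [hdet]
    simp [one_sub_I_ne_zero]

theorem coe_basisChange : (basisChange : Matrix (Fin 2) (Fin 2) ℂ) =
    !![2, -1 + (1 + Real.sqrt 2) * I;
      Real.sqrt 2 * (1 + I), -1 + (1 - Real.sqrt 2) * I] := rfl

theorem basisChange_mul_iInt :
    (basisChange : Matrix (Fin 2) (Fin 2) ℂ) * iInt.val.map toComplex = iM * basisChange := by
  simp only [coe_basisChange, iInt, iM, map_of_fin_two, map_neg, map_one, toComplex_sqrtd,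
    mul_fin_two, of_fin_two_inj]
  grind [I_sq, ofReal_sqrt_two_sq]

theorem basisChange_mul_wInt :
    (basisChange : Matrix (Fin 2) (Fin 2) ℂ) * wInt.val.map toComplex = wM * basisChange := by
  simp only [coe_basisChange, wInt, wM, map_of_fin_two, map_neg, map_one, map_zero,
    smul_of_fin_two, smul_eq_mul, mul_fin_two, of_fin_two_inj]
  grind [I_sq, ofReal_sqrt_two_sq]

theorem basisChange_mul_dInt :
    (basisChange : Matrix (Fin 2) (Fin 2) ℂ) * dInt.val.map toComplex = dM * basisChange := by
  simp only [coe_basisChange, dInt, dM, map_of_fin_two, map_neg, map_add, map_sub, map_one,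
    toComplex_sqrtd, toComplex_two, ofReal_sqrt_two_inv, smul_of_fin_two, smul_eq_mul,
    mul_fin_two, of_fin_two_inj]
  grind [I_sq, ofReal_sqrt_two_sq]

/-- The embedding of `GL₂(ℤ[√-2])` into `GL₂(ℂ)` which maps `integralG` onto `G`. -/
def complexify : GL (Fin 2) ℤ[√-2] →* GL (Fin 2) ℂ :=
  (MulAut.conj basisChange).toMonoidHom.comp (Matrix.GeneralLinearGroup.map toComplex)

theorem coe_complexify_eq_iff (g : GL (Fin 2) ℤ[√-2]) (A : Matrix (Fin 2) (Fin 2) ℂ) :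
    (complexify g : Matrix (Fin 2) (Fin 2) ℂ) = A ↔
      (basisChange : Matrix (Fin 2) (Fin 2) ℂ) * g.val.map toComplex = A * basisChange :=
  Units.mul_inv_eq_iff_eq_mul basisChange

theorem complexify_injective : Function.Injective complexify :=
  (MulAut.conj basisChange).injective.comp
    (Units.map_injective (Matrix.map_injective toComplex_injective))

theorem map_complexify_integralG : integralG.map complexify = G := by
  rw [integralG, G, MonoidHom.map_closure, Set.image_insert_eq, Set.image_insert_eq,
    Set.image_singleton]
  congr 1
  ext g
  simp only [Set.mem_insert_iff, Set.mem_singleton_iff, Set.mem_ofPred_eq, Units.ext_iff,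
    (coe_complexify_eq_iff _ _).2 basisChange_mul_iInt,
    (coe_complexify_eq_iff _ _).2 basisChange_mul_wInt,
    (coe_complexify_eq_iff _ _).2 basisChange_mul_dInt]

/-- The isomorphism of `G` with its integral form. -/
def integralGEquiv : integralG ≃* G :=
  (integralG.equivMapOfInjective complexify complexify_injective).trans
    (MulEquiv.subgroupCongr map_complexify_integralG)

end Conjugation

section Representations

/-- Reduction modulo `√-2`. -/
def reduceTwo : ℤ[√-2] →+* ZMod 2 := Zsqrtd.lift ⟨0, by decide⟩

/-- Reduction modulo `1 - √-2`, one of the two primes above `3`. -/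
def reduceThree : ℤ[√-2] →+* ZMod 3 := Zsqrtd.lift ⟨1, by decide⟩

/-- The quadratic character of the determinant modulo `1 - √-2`. -/
def detSign : GL (Fin 2) ℤ[√-2] →* ℤ :=
  (quadraticChar (ZMod 3)).toMonoidHom.comp <| (Units.coeHom (ZMod 3)).comp <|
    Matrix.GeneralLinearGroup.det.comp (Matrix.GeneralLinearGroup.map reduceThree)

/-- All irreducible representations together, before extension of scalars. -/
def integralRep : GL (Fin 2) ℤ[√-2] →* Blocks ℤ ℤ[√-2] :=
  let mod₂ := Matrix.GeneralLinearGroup.map reduceTwo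
  let mod₃ := Matrix.GeneralLinearGroup.map reduceThree
  (1 : _ →* ℤ).prod <| detSign.prod <| ((steinbergRep 2).comp mod₂).prod <|
    (Units.coeHom _).prod <| ((steinbergRep 3).comp mod₃).prod <|
      (twist detSign ((steinbergRep 3).comp mod₃)).prod (oddRep.comp mod₃)

theorem regularTrace_integralRep_word :
    ∀ x, word x ≠ 1 → Blocks.regularTrace reInt (integralRep (word x)) = 0 := by
  decide +kernel

/-- All irreducible real representations of `integralG` together. -/
def realRep : integralG →* Blocks ℝ ℂ :=
  ((Blocks.map (Int.castRingHom ℝ) toComplex : _ →* _).comp integralRep).comp integralG.subtype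

theorem regularTrace_realRep {g : integralG} (hg : g ≠ 1) :
    Blocks.regularTrace reLm (realRep g) = 0 := by
  obtain ⟨x, hx⟩ : (g : GL (Fin 2) ℤ[√-2]) ∈ Set.range word := coe_integralG ▸ g.2
  have h : Blocks.regularTrace reInt (integralRep g) = 0 := by
    rw [← hx]
    exact regularTrace_integralRep_word x (by rwa [hx, Ne, OneMemClass.coe_eq_one])
  calc
    Blocks.regularTrace reLm (realRep g)
        = (Blocks.regularTrace reInt (integralRep g) : ℝ) :=
      Blocks.regularTrace_map (Int.castRingHom ℝ) toComplex re_toComplex (integralRep g)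
    _ = 0 := by rw [h, Int.cast_zero]

end Representations

theorem group_algebra_of_G :
    Nonempty (MonoidAlgebra ℝ G ≃ₐ[ℝ]
      ℝ × ℝ × Matrix (Fin 2) (Fin 2) ℝ × Matrix (Fin 2) (Fin 2) ℂ ×
        Matrix (Fin 3) (Fin 3) ℝ × Matrix (Fin 3) (Fin 3) ℝ ×
        Matrix (Fin 4) (Fin 4) ℝ) := by
  have : Finite integralG := Nat.finite_of_card_ne_zero (by simp [card_integralG])
  have hbij := lift_bijective_of_map_eq_zero realRep (Blocks.regularTrace reLm)
    (by simp [Blocks.regularTrace_reLm_one]) (fun _ ↦ regularTrace_realRep)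
    (Blocks.finrank_real_complex.trans card_integralG.symm)
  exact ⟨(MonoidAlgebra.domCongr ℝ ℝ integralGEquiv.symm).trans (AlgEquiv.ofBijective _ hbij)⟩
end
end
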